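/- For every n ≥ k-1: every factor of 𝐬 of length |s_n| lies in exactly one of the k sets Ω_n^0 := { C_j(s_n) : 0 ≤ j ≤ |s_n|-1 } and Ω_n^r for 1 ≤ r ≤ k-1; conversely every element of each of these k sets is a factor of 𝐬. That is, the set of factors of 𝐬 of length |s_n| is the disjoint union Ω_n^0 ⊍ Ω_n^1 ⊍ ⋯ ⊍ Ω_n^{k-1}. -/

import Mathlib

/-!
Write `L = |s_n|` and `p_n = s_{n-1}^{d_n} ⋯ s_0^{d_1}`. For `0 ≤ j < min(n, k)` let `P_{n,j}` be the
prefix `s_{n-1}^{d_n} ⋯ s_{n-j}^{d_{n-j+1}} s_{n-j-1}` of `p_n`, so that `p_n = P_{n,j} D_{n-j-1}`;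
for `n ≤ j < k` it is `p_n` followed by one letter. Always `s_n = P_{n,k-1}`. The words
`p_n`, `D_n` and `P_{n,j} p_n` are palindromes (`p_pal`, `D_pal`).

*Covering.* For `N ≥ n` the word `s_N` is a concatenation of blocks `s_n` and `s_n P_{n,j}` with
`j ≤ k - 2` (`Blk`), so a factor of length `L` is a window of `s_n s_n` or of
`s_n P_{n,j} s_n = p_n · reverse(G) · D · G`, where `D = D_{n-j-1}` and `G = G_{n,j+1}` (`sPs_eq`).
Since `p_n · reverse(G) · D = s_n p_n` is `s_n`-periodic, the windows inside this prefix are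
conjugates of `s_n`; the last window is `s_n`, and the remaining ones are exactly the singular words
of kind `j + 1`. Conversely `s_n p_n` and `s_n P_{n,j} s_n` are factors, which makes all conjugates
and singular words factors.

*Disjointness.* This follows by counting. There are at least `(k - 1) L + 1` factors of length `L`,
since in each length some suffix of a `p_m` can be followed by all `k` letters (`complexity`). On the
other hand there are `L` conjugation indices and `L - |D_{n-r}| - 1` windows for the `r`-th kind; by
`L = k + ∑_{1 ≤ r ≤ k-1} |D_{n-r}|` (`s_length`) these numbers add up to exactly `(k - 1) L + 1`. As
the enumeration reaches every factor, it has no repetitions (`cand_injOn`), and in particular no word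
is of two kinds.
-/

namespace Epi

variable {α : Type*}

/-- `pw w p` is the `p`-fold concatenation `w^p`. -/
def pw (w : List α) : ℕ → List α
  | 0 => []
  | p + 1 => w ++ pw w p

/-- `S k a d m` is the word `s_{m-(k-1)}` of the paper (shifted indexing: `m : ℕ`
ranges over the indices `n ≥ 1-k`). -/
def S (k : ℕ) (a : ℕ → α) (d : ℕ → ℕ) : ℕ → List α
  | m =>
    if h : m < max k 1 then [a ((m + 1) % k + 1)]
    else
      ((List.range (k - 1)).map
          (fun j => pw (S k a d (m - 1 - j)) (d (m + 1 - k - j)))).flatten ++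
        S k a d (m - max k 1)
  termination_by m => m
  decreasing_by all_goals omega

/-- `s k a d n` is the word `s_n`, for `n ≥ 0`. -/
def s (k : ℕ) (a : ℕ → α) (d : ℕ → ℕ) (n : ℕ) : List α :=
  S k a d (n + (k - 1))

/-- `D k a d n` is the word `D_n = s_n^{d_{n+1}-1} s_{n-1}^{d_n} ⋯ s_1^{d_2} s_0^{d_1}`. -/
def D (k : ℕ) (a : ℕ → α) (d : ℕ → ℕ) (n : ℕ) : List α :=
  pw (s k a d n) (d (n + 1) - 1) ++
    ((List.range n).map (fun j => pw (s k a d (n - 1 - j)) (d (n - j)))).flatten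

/-- `G k a d n r` is the word `G_{n,r}`: `s_n` with its prefix of length `|D_{n-r}|` removed. -/
def G (k : ℕ) (a : ℕ → α) (d : ℕ → ℕ) (n r : ℕ) : List α :=
  (s k a d n).drop (D k a d (n - r)).length

/-- `Om k a d n r` is the set `Ω_n^r` of singular `n`-words of the `r`-th kind. -/
def Om (k : ℕ) (a : ℕ → α) (d : ℕ → ℕ) (n r : ℕ) : Set (List α) :=
  { w | w.length = (s k a d n).length ∧
      w <:+:
        ((((G k a d n r).reverse ++ D k a d (n - r) ++ G k a d n r).drop 1).dropLast) }

/-- `w` is a factor of the infinite word `𝐬`. -/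
def FactorS (k : ℕ) (a : ℕ → α) (d : ℕ → ℕ) (w : List α) : Prop :=
  ∃ N, w <:+: s k a d N



/-! ### Conjugates, periods and palindromes -/

section Words

variable {α : Type*}

theorem pw_comm (w : List α) (p : ℕ) : w ++ pw w p = pw w p ++ w := by
  induction p with
  | zero => simp [pw]
  | succ p ih => simp only [pw]; rw [List.append_assoc, ← ih]

theorem pw_length (w : List α) (p : ℕ) : (pw w p).length = p * w.length := by
  induction p with
  | zero => simp [pw]
  | succ p ih => simp only [pw, List.length_append, ih]; ring

theorem prefix_pw_append {w q : List α} (h : q <+: w ++ q) (p : ℕ) : q <+: pw w p ++ q := by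
  induction p with
  | zero => simp [pw]
  | succ p ih =>
    refine h.trans ?_
    simp only [pw, List.append_assoc]
    exact (List.prefix_append_right_inj w).2 ih

/-- If `q` and `wq` are palindromes then every `w^p q` is a palindrome; this is the form
`w^p q = q (reverse w)^p`. -/
theorem pw_append_eq {w q : List α} (hq : q.reverse = q) (h : (w ++ q).reverse = w ++ q) (p : ℕ) :
    pw w p ++ q = q ++ (pw w p).reverse := by
  induction p with
  | zero => simp [pw]
  | succ p ih =>
    have h' : w ++ q = q ++ w.reverse := by rw [← h, List.reverse_append, hq]
    calc pw w (p + 1) ++ q = w ++ (pw w p ++ q) := by simp [pw]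
      _ = (w ++ q) ++ (pw w p).reverse := by rw [ih]; simp
      _ = q ++ (pw w p ++ w).reverse := by rw [h']; simp
      _ = q ++ (pw w (p + 1)).reverse := by rw [← pw_comm]; rfl

theorem conj_of_infix_sq {x w : List α} (hx : x ≠ []) (h : w <:+: x ++ x)
    (hl : w.length = x.length) : ∃ j, j < x.length ∧ w = x.drop j ++ x.take j := by
  have hpos : 0 < x.length := List.length_pos_iff.2 hx
  obtain ⟨u, v, h⟩ := h
  have hu : u.length ≤ x.length := by
    have := congrArg List.length h
    simp at this; omega
  have h1 : w = ((x ++ x).drop u.length).take x.length := by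
    rw [← h, ← hl]; simp
  rcases Nat.lt_or_ge u.length x.length with h2 | h2
  · refine ⟨u.length, h2, ?_⟩
    rw [h1, List.drop_append_of_le_length hu, List.take_append]
    simp [Nat.sub_sub_self hu]
  · refine ⟨0, hpos, ?_⟩
    have h3 : u.length = x.length := le_antisymm hu h2
    rw [h1, h3]; simp

/-- Windows of length `|x|` of an `x`-periodic word `xy` are conjugates of `x`. -/
theorem conj_of_infix_periodic {x : List α} (hx : x ≠ []) (m : ℕ) :
    ∀ (y w : List α), y.length ≤ m → y <+: x ++ y → w <:+: x ++ y → w.length = x.length →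
      ∃ j, j < x.length ∧ w = x.drop j ++ x.take j := by
  have hpos : 0 < x.length := List.length_pos_iff.2 hx
  induction m with
  | zero =>
    intro y w hy _ hw hl
    have : y = [] := List.length_eq_zero_iff.1 (by omega)
    subst this
    exact conj_of_infix_sq hx (hw.trans (by simpa using (List.prefix_append x x).isInfix)) hl
  | succ m ih =>
    intro y w hy hp hw hl
    rcases Nat.lt_or_ge x.length y.length with h | h
    · obtain ⟨y', rfl⟩ := List.prefix_of_prefix_length_le (List.prefix_append x y) hp h.le
      have hp' : y' <+: x ++ y' := (List.prefix_append_right_inj x).1 hp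
      rcases List.infix_append_iff.1 hw with h1 | h1 | ⟨t₁, t₂, rfl, h1, h2⟩
      · exact conj_of_infix_sq hx (h1.trans (List.prefix_append x x).isInfix) hl
      · refine ih y' w ?_ hp' h1 hl
        simp at hy; omega
      · have h3 : t₂ <+: x := by
          refine List.prefix_of_prefix_length_le h2 (List.prefix_append x y') ?_
          simp at hl; omega
        obtain ⟨u, hu⟩ := h1
        obtain ⟨v, hv⟩ := h3
        refine conj_of_infix_sq hx ⟨u, v, ?_⟩ hl
        rw [← List.append_assoc, hu, List.append_assoc, hv]
    · have h3 : y <+: x := List.prefix_of_prefix_length_le hp (List.prefix_append x y) h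
      exact conj_of_infix_sq hx
        (hw.trans ((List.prefix_append_right_inj x).2 h3).isInfix) hl

end Words

/-! ### The words `p_n` and `P_{n,j}` -/

section Structure

variable {α : Type*}

/-- The word `p_n = s_{n-1}^{d_n} ⋯ s_0^{d_1}`, a palindromic prefix of the infinite word. -/
def p (k : ℕ) (a : ℕ → α) (d : ℕ → ℕ) (n : ℕ) : List α :=
  ((List.range n).map (fun j => pw (s k a d (n - 1 - j)) (d (n - j)))).flatten

/-- The word `P_{n,j} = s_{n-1}^{d_n} ⋯ s_{n-j}^{d_{n-j+1}} s_{n-j-1}` for `j < n`, and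
`p_n` followed by one letter for `n ≤ j < k`. These are the images of the `k` letters under
`ψ_1^{d_1} ⋯ ψ_n^{d_n}`, where `ψ_i` fixes the `i`-th letter of the (periodically repeated)
alphabet and puts it in front of each of the others. -/
def P (k : ℕ) (a : ℕ → α) (d : ℕ → ℕ) : ℕ → ℕ → List α
  | 0, j => [a (k - j)]
  | n + 1, 0 => s k a d n
  | n + 1, j + 1 => pw (s k a d n) (d (n + 1)) ++ P k a d n j

/-- The last letter of `P_{n,j}`. -/
def lastLetter (k : ℕ) (a : ℕ → α) (n j : ℕ) : α := a ((n + (k - 1) - j) % k + 1)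

variable {k : ℕ} {a : ℕ → α} {d : ℕ → ℕ}

theorem p_succ (n : ℕ) : p k a d (n + 1) = pw (s k a d n) (d (n + 1)) ++ p k a d n := by
  unfold p
  rw [List.range_succ_eq_map]
  simp only [List.map_cons, List.flatten_cons, List.map_map, Nat.add_sub_cancel, Nat.sub_zero]
  congr 3
  funext j
  simp only [Function.comp]
  rw [show n - (j + 1) = n - 1 - j by omega, show n + 1 - (j + 1) = n - j by omega]

theorem D_eq (n : ℕ) : D k a d n = pw (s k a d n) (d (n + 1) - 1) ++ p k a d n := rfl

theorem S_lt (hk : 2 ≤ k) {m : ℕ} (hm : m < k) : S k a d m = [a ((m + 1) % k + 1)] := by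
  rw [S, dif_pos (by omega)]

theorem flatten_S_eq (hk : 2 ≤ k) (hd0 : d 0 = 0) (J : ℕ) : ∀ n, J ≤ k - 1 →
    ((List.range J).map
      (fun j => pw (S k a d (n + (k - 1) - j)) (d (n + 1 - j)))).flatten ++
        S k a d (n + (k - 1) - J) = P k a d (n + 1) J := by
  induction J with
  | zero => intro n _; simp [P, s]
  | succ J ih =>
    intro n hJ
    rw [List.range_succ_eq_map]
    simp only [List.map_cons, List.flatten_cons, List.map_map, Nat.sub_zero, List.append_assoc, P]
    congr 1
    cases n with
    | zero =>
      have h0 : ((List.range J).map ((fun j => pw (S k a d (0 + (k - 1) - j)) (d (0 + 1 - j))) ∘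
          Nat.succ)) = (List.range J).map (fun _ => []) := by
        apply List.map_congr_left
        intro j _
        simp [hd0, pw]
      rw [h0, S_lt hk (by omega)]
      simp only [P]
      rw [show 0 + (k - 1) - (J + 1) + 1 = k - J - 1 by omega, Nat.mod_eq_of_lt (by omega),
        show k - J - 1 + 1 = k - J by omega]
      simp
    | succ n =>
      rw [← ih n (by omega), show n + 1 + (k - 1) - (J + 1) = n + (k - 1) - J by omega]
      congr 3
      funext j
      simp only [Function.comp]
      rw [show n + 1 + (k - 1) - j.succ = n + (k - 1) - j by omega,
        show n + 1 + 1 - j.succ = n + 1 - j by omega]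

theorem s_eq_P (hk : 2 ≤ k) (hd0 : d 0 = 0) (n : ℕ) : s k a d n = P k a d n (k - 1) := by
  cases n with
  | zero =>
    unfold s
    rw [S_lt hk (by omega)]
    simp only [P]
    rw [show 0 + (k - 1) + 1 = k by omega, show k - (k - 1) = 1 by omega]
    simp
  | succ n =>
    rw [← flatten_S_eq hk hd0 (k - 1) n le_rfl, s, S, dif_neg (by omega)]
    rw [show n + 1 + (k - 1) - max k 1 = n + (k - 1) - (k - 1) by omega]
    congr 3
    funext j
    rw [show n + 1 + (k - 1) - 1 - j = n + (k - 1) - j by omega,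
        show n + 1 + (k - 1) + 1 - k - j = n + 1 - j by omega]

theorem s_succ (hk : 2 ≤ k) (hd0 : d 0 = 0) (n : ℕ) :
    s k a d (n + 1) = pw (s k a d n) (d (n + 1)) ++ P k a d n (k - 2) := by
  rw [s_eq_P hk hd0 (n + 1), show k - 1 = (k - 2) + 1 by omega]
  rfl

theorem lastLetter_zero (hk : 2 ≤ k) {j : ℕ} (hj : j < k) : lastLetter k a 0 j = a (k - j) := by
  unfold lastLetter
  rw [Nat.mod_eq_of_lt (by omega)]
  congr 1; omega

theorem lastLetter_succ_zero (hk : 2 ≤ k) (n : ℕ) : lastLetter k a (n + 1) 0 = lastLetter k a n (k - 1) := by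
  unfold lastLetter
  rw [show n + 1 + (k - 1) - 0 = n + k by omega, show n + (k - 1) - (k - 1) = n by omega,
    Nat.add_mod_right]

theorem lastLetter_succ_succ (n j : ℕ) : lastLetter k a (n + 1) (j + 1) = lastLetter k a n j := by
  unfold lastLetter
  congr 3; omega

theorem lastLetter_last (n : ℕ) : lastLetter k a n (k - 1) = a (n % k + 1) := by
  unfold lastLetter
  rw [show n + (k - 1) - (k - 1) = n by omega]

/-- `P_{n,j} p_n` starts with `p_n` followed by the last letter of `P_{n,j}`. For `j = k - 1` this
makes `p_n` an `s_n`-periodic word and determines the letter after it. -/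
theorem p_prefix (hk : 2 ≤ k) (hd0 : d 0 = 0) (n : ℕ) : ∀ j, j < k →
    p k a d n ++ [lastLetter k a n j] <+: P k a d n j ++ p k a d n := by
  induction n with
  | zero =>
    intro j hj
    simp [p, P, lastLetter_zero hk hj]
  | succ n ih =>
    have hs : p k a d n ++ [lastLetter k a n (k - 1)] <+: s k a d n ++ p k a d n := by
      rw [s_eq_P hk hd0]; exact ih _ (by omega)
    have hs' : p k a d n <+: s k a d n ++ p k a d n := (List.prefix_append _ _).trans hs
    intro j hj
    rw [p_succ]
    cases j with
    | zero =>
      rw [lastLetter_succ_zero hk]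
      simp only [P]
      rw [← List.append_assoc (s k a d n), pw_comm, List.append_assoc, List.append_assoc]
      exact (List.prefix_append_right_inj _).2 hs
    | succ j =>
      rw [lastLetter_succ_succ]
      simp only [P, List.append_assoc]
      refine (List.prefix_append_right_inj _).2 ((ih j (by omega)).trans ?_)
      exact (List.prefix_append_right_inj _).2 (prefix_pw_append hs' _)

theorem p_prefix_s (hk : 2 ≤ k) (hd0 : d 0 = 0) (n : ℕ) :
    p k a d n ++ [lastLetter k a n (k - 1)] <+: s k a d n ++ p k a d n := by
  rw [s_eq_P hk hd0]; exact p_prefix hk hd0 n _ (by omega)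

theorem p_pal (hk : 2 ≤ k) (hd0 : d 0 = 0) (n : ℕ) : (p k a d n).reverse = p k a d n ∧ ∀ j, j < k →
    (P k a d n j ++ p k a d n).reverse = P k a d n j ++ p k a d n := by
  induction n with
  | zero => simp [p, P]
  | succ n ih =>
    obtain ⟨h1, h2⟩ := ih
    have hs : (s k a d n ++ p k a d n).reverse = s k a d n ++ p k a d n := by
      rw [s_eq_P hk hd0]; exact h2 _ (by omega)
    have hq := pw_append_eq h1 hs (d (n + 1))
    refine ⟨?_, ?_⟩
    · rw [p_succ, List.reverse_append, h1, hq]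
    · intro j hj
      rw [p_succ]
      cases j with
      | zero =>
        have hq' := pw_append_eq h1 hs (d (n + 1) + 1)
        simp only [P]
        rw [← List.append_assoc, show s k a d n ++ pw (s k a d n) (d (n + 1)) =
          pw (s k a d n) (d (n + 1) + 1) from rfl, List.reverse_append, h1, hq']
      | succ j =>
        simp only [P]
        have h3 := h2 j (by omega)
        rw [hq]
        simp only [List.reverse_append, List.reverse_reverse, List.append_assoc, h1] at h3 ⊢
        rw [← List.append_assoc (p k a d n), h3]
        simp only [List.append_assoc]

/-- Both `p_n` and `s_n p_n` are palindromes, hence this identity. -/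
theorem s_append_p (hk : 2 ≤ k) (hd0 : d 0 = 0) (n : ℕ) :
    s k a d n ++ p k a d n = p k a d n ++ (s k a d n).reverse := by
  have h := p_pal (a := a) hk hd0 n
  have h2 := h.2 (k - 1) (by omega)
  rw [← s_eq_P hk hd0] at h2
  rw [← h2, List.reverse_append, h.1]

theorem D_pal (hk : 2 ≤ k) (hd0 : d 0 = 0) (n : ℕ) : (D k a d n).reverse = D k a d n := by
  have h := p_pal (a := a) hk hd0 n
  have h2 := h.2 (k - 1) (by omega)
  rw [← s_eq_P hk hd0] at h2
  rw [D_eq, List.reverse_append, h.1, pw_append_eq h.1 h2]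

/-- `D_{n-j-1}` is what is left of `p_n` after its prefix `P_{n,j}`. -/
theorem P_append_D (hd : ∀ i, 1 ≤ i → 1 ≤ d i) (n : ℕ) : ∀ j, j < n →
    P k a d n j ++ D k a d (n - (j + 1)) = p k a d n := by
  induction n with
  | zero => intro j hj; omega
  | succ n ih =>
    intro j hj
    rw [p_succ]
    cases j with
    | zero =>
      obtain ⟨e, he⟩ : ∃ e, d (n + 1) = e + 1 := ⟨d (n + 1) - 1, by have := hd (n + 1); omega⟩
      simp only [P, Nat.zero_add, Nat.add_sub_cancel, D_eq, he, pw, List.append_assoc]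
    | succ j =>
      rw [show n + 1 - (j + 1 + 1) = n - (j + 1) by omega, ← ih j (by omega)]
      simp only [P, List.append_assoc]

theorem P_of_le (n : ℕ) : ∀ j, n ≤ j → (P k a d n j).length = (p k a d n).length + 1 := by
  induction n with
  | zero => intro j _; simp [P, p]
  | succ n ih =>
    intro j hj
    obtain ⟨j, rfl⟩ : ∃ i, j = i + 1 := ⟨j - 1, by omega⟩
    rw [p_succ]
    simp only [P, List.length_append, ih j (by omega)]
    omega

/-- The quantity `|D_{n-j-1}| + 1`, with the convention `|D_m| = -1` for negative `m`. -/
def e (k : ℕ) (a : ℕ → α) (d : ℕ → ℕ) (n j : ℕ) : ℕ :=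
  if j < n then (D k a d (n - (j + 1))).length + 1 else 0

theorem P_length (hd : ∀ i, 1 ≤ i → 1 ≤ d i) (n j : ℕ) :
    (P k a d n j).length + e k a d n j = (p k a d n).length + 1 := by
  unfold e
  split_ifs with h
  · rw [← P_append_D hd n j h, List.length_append]; omega
  · rw [P_of_le n j (by omega)]

/-- `|s_n| = k + |D_{n-1}| + ⋯ + |D_{n-k+1}|` (with `|D_m| = -1` for negative `m`); this makes the counts of conjugates and of
singular words add up to the factor complexity. -/
theorem s_length (hk : 2 ≤ k) (hd0 : d 0 = 0) (hd : ∀ i, 1 ≤ i → 1 ≤ d i) (n : ℕ) :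
    (s k a d n).length = 1 + ∑ j ∈ Finset.range (k - 1), e k a d n j := by
  induction n with
  | zero => rw [s_eq_P hk hd0]; simp [P, e]
  | succ n ih =>
    have h1 := P_length (a := a) (k := k) hd n (k - 2)
    have h2 : e k a d (n + 1) 0 =
        (d (n + 1) - 1) * (s k a d n).length + (p k a d n).length + 1 := by
      simp [e, D_eq, pw_length]
    have h3 : ∀ j, e k a d (n + 1) (j + 1) = e k a d n j := by
      intro j
      simp [e, show n + 1 - (j + 1 + 1) = n - (j + 1) by omega]
    rw [s_succ hk hd0, List.length_append, pw_length]
    obtain ⟨c, hc⟩ : ∃ c, d (n + 1) = c + 1 := ⟨d (n + 1) - 1, by have := hd (n + 1); omega⟩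
    obtain ⟨K, rfl⟩ : ∃ K, k = K + 2 := ⟨k - 2, by omega⟩
    simp only [show K + 2 - 1 = K + 1 by omega, show K + 2 - 2 = K by omega] at *
    rw [Finset.sum_range_succ', h2, hc]
    rw [Finset.sum_range_succ] at ih
    simp only [h3, Nat.add_sub_cancel]
    nlinarith

theorem e_lt (hk : 2 ≤ k) (hd0 : d 0 = 0) (hd : ∀ i, 1 ≤ i → 1 ≤ d i) (n j : ℕ) (hj : j < k - 1) :
    e k a d n j < (s k a d n).length := by
  have := Finset.single_le_sum (f := fun j => e k a d n j) (fun _ _ => Nat.zero_le _)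
    (Finset.mem_range.2 hj)
  rw [s_length hk hd0 hd n]
  omega

theorem s_ne_nil (hk : 2 ≤ k) (hd0 : d 0 = 0) (hd : ∀ i, 1 ≤ i → 1 ≤ d i) (n : ℕ) :
    s k a d n ≠ [] := by
  rw [← List.length_pos_iff, s_length hk hd0 hd n]; omega

theorem s_prefix_succ (hk : 2 ≤ k) (hd0 : d 0 = 0) (hd : ∀ i, 1 ≤ i → 1 ≤ d i) (n : ℕ) :
    s k a d n <+: s k a d (n + 1) := by
  rw [s_succ hk hd0]
  obtain ⟨c, hc⟩ : ∃ c, d (n + 1) = c + 1 := ⟨d (n + 1) - 1, by have := hd (n + 1); omega⟩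
  rw [hc, pw, List.append_assoc]
  exact List.prefix_append _ _

theorem s_prefix (hk : 2 ≤ k) (hd0 : d 0 = 0) (hd : ∀ i, 1 ≤ i → 1 ≤ d i) {m n : ℕ} (h : m ≤ n) :
    s k a d m <+: s k a d n := by
  induction h with
  | refl => exact List.prefix_rfl
  | step _ ih => exact ih.trans (s_prefix_succ hk hd0 hd _)

theorem D_prefix_succ (hk : 2 ≤ k) (hd0 : d 0 = 0) (hd : ∀ i, 1 ≤ i → 1 ≤ d i) (n : ℕ) :
    D k a d n <+: s k a d (n + 1) := by
  obtain ⟨c, hc⟩ : ∃ c, d (n + 1) = c + 1 := ⟨d (n + 1) - 1, by have := hd (n + 1); omega⟩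
  rw [s_succ hk hd0, D_eq, hc, Nat.add_sub_cancel, pw, pw_comm, List.append_assoc,
    List.prefix_append_right_inj]
  have h1 : p k a d n <+: P k a d n (k - 2) ++ p k a d n :=
    (List.prefix_append _ _).trans (p_prefix hk hd0 n (k - 2) (by omega))
  have h2 : p k a d n <+: s k a d n ++ p k a d n :=
    (List.prefix_append _ _).trans (p_prefix_s hk hd0 n)
  have h3 : p k a d n <+: (s k a d n ++ P k a d n (k - 2)) ++ p k a d n := by
    rw [List.append_assoc]
    exact h2.trans ((List.prefix_append_right_inj _).2 h1)
  refine List.prefix_of_prefix_length_le h3 (List.prefix_append _ _) ?_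
  have h4 := P_length (a := a) (k := k) hd n (k - 2)
  have h5 := e_lt (a := a) hk hd0 hd n (k - 2) (by omega)
  rw [List.length_append]; omega

theorem D_prefix (hk : 2 ≤ k) (hd0 : d 0 = 0) (hd : ∀ i, 1 ≤ i → 1 ≤ d i) {m n : ℕ} (h : m < n) :
    D k a d m <+: s k a d n :=
  (D_prefix_succ hk hd0 hd m).trans (s_prefix hk hd0 hd h)

theorem sp_infix (hk : 2 ≤ k) (hd0 : d 0 = 0) (hd : ∀ i, 1 ≤ i → 1 ≤ d i) (n : ℕ) :
    s k a d n ++ p k a d n <:+: s k a d (n + 2) := by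
  refine List.IsInfix.trans ?_ (D_prefix_succ hk hd0 hd (n + 1)).isInfix
  obtain ⟨c, hc⟩ : ∃ c, d (n + 1) = c + 1 := ⟨d (n + 1) - 1, by have := hd (n + 1); omega⟩
  rw [D_eq, p_succ, hc, pw, pw_comm]
  exact (List.IsSuffix.isInfix
    ⟨pw (s k a d (n + 1)) (d (n + 1 + 1) - 1) ++ pw (s k a d n) c, by simp⟩)

theorem P_suffix (hd : ∀ i, 1 ≤ i → 1 ≤ d i) (n j i : ℕ) :
    s k a d n ++ P k a d n j <:+ P k a d (n + 1 + i) (j + 1 + i) := by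
  induction i with
  | zero =>
    obtain ⟨c, hc⟩ : ∃ c, d (n + 1) = c + 1 := ⟨d (n + 1) - 1, by have := hd (n + 1); omega⟩
    simp only [P, hc, pw, pw_comm]
    exact ⟨pw (s k a d n) c, by simp⟩
  | succ i ih => exact ih.trans (List.suffix_append _ _)

/-- Each `s_n P_{n,j} s_n` with `j ≤ k - 2` is a factor. -/
theorem sPs_infix (hk : 2 ≤ k) (hd0 : d 0 = 0) (hd : ∀ i, 1 ≤ i → 1 ≤ d i) (n j : ℕ)
    (hj : j < k - 1) :
    FactorS k a d (s k a d n ++ P k a d n j ++ s k a d n) := by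
  -- `s_N` ends with `s_n P_{n,j}` for `N = n + k - 1 - j`, and `s_N p_N` is a factor.
  obtain ⟨i, hi⟩ : ∃ i, k - 1 = j + 1 + i := ⟨k - 1 - (j + 1), by omega⟩
  refine ⟨n + 1 + i + 2, List.IsInfix.trans ?_ (sp_infix hk hd0 hd (n + 1 + i))⟩
  obtain ⟨u, hu⟩ := P_suffix (a := a) (k := k) hd n j i
  rw [← hi, ← s_eq_P hk hd0] at hu
  have h1 : s k a d n <+: p k a d (n + 1 + i) := by
    rw [show n + 1 + i = (n + i) + 1 by omega, p_succ]
    obtain ⟨c, hc⟩ : ∃ c, d (n + i + 1) = c + 1 :=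
      ⟨d (n + i + 1) - 1, by have := hd (n + i + 1); omega⟩
    rw [hc, pw, List.append_assoc]
    exact (s_prefix hk hd0 hd (by omega)).trans (List.prefix_append _ _)
  obtain ⟨v, hv⟩ := h1
  exact ⟨u, v, by rw [← hu, ← hv]; simp⟩

theorem D_append_G (hk : 2 ≤ k) (hd0 : d 0 = 0) (hd : ∀ i, 1 ≤ i → 1 ≤ d i) {n r : ℕ}
    (hr : 1 ≤ r) (hrn : r ≤ n) :
    D k a d (n - r) ++ G k a d n r = s k a d n := by
  unfold G
  exact (List.prefix_append_drop (D_prefix hk hd0 hd (by omega))).symm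

/-- The left `s_n`-periodic run `s_n p_n` and the right one, starting at the last `s_n`,
overlap exactly in `D_{n-j-1}`. -/
theorem sPs_eq (hk : 2 ≤ k) (hd0 : d 0 = 0) (hd : ∀ i, 1 ≤ i → 1 ≤ d i) {n j : ℕ} (hjn : j < n) :
    s k a d n ++ P k a d n j ++ s k a d n =
      p k a d n ++ ((G k a d n (j + 1)).reverse ++ D k a d (n - (j + 1)) ++ G k a d n (j + 1)) := by
  have h1 := D_append_G (a := a) hk hd0 hd (n := n) (r := j + 1) (by omega) (by omega)
  have h2 := P_append_D (a := a) (k := k) hd n j hjn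
  have h3 := s_append_p (a := a) hk hd0 n
  have h4 : (s k a d n).reverse = (G k a d n (j + 1)).reverse ++ D k a d (n - (j + 1)) := by
    rw [← h1, List.reverse_append, D_pal hk hd0]
  calc s k a d n ++ P k a d n j ++ s k a d n
      = s k a d n ++ P k a d n j ++ (D k a d (n - (j + 1)) ++ G k a d n (j + 1)) := by rw [h1]
    _ = s k a d n ++ (P k a d n j ++ D k a d (n - (j + 1))) ++ G k a d n (j + 1) := by simp
    _ = p k a d n ++ ((s k a d n).reverse ++ G k a d n (j + 1)) := by rw [h2, h3]; simp
    _ = _ := by rw [h4]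

end Structure

/-! ### Every factor of length `|s_n|` is a conjugate or singular -/

section Cover

variable {α : Type*}

/-- Concatenations of the blocks `s_n` and `s_n P_{n,j}`, `0 ≤ j ≤ k - 2`. -/
inductive Blk (k : ℕ) (a : ℕ → α) (d : ℕ → ℕ) (n : ℕ) : List α → Prop
  | nil : Blk k a d n []
  | single (u : List α) : Blk k a d n u → Blk k a d n (s k a d n ++ u)
  | double (j : ℕ) (u : List α) : j < k - 1 → Blk k a d n u →
      Blk k a d n (s k a d n ++ P k a d n j ++ u)

variable {k : ℕ} {a : ℕ → α} {d : ℕ → ℕ}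

theorem Blk.append {n : ℕ} {u v : List α} (hu : Blk k a d n u) (hv : Blk k a d n v) :
    Blk k a d n (u ++ v) := by
  induction hu with
  | nil => exact hv
  | single u _ ih => rw [List.append_assoc]; exact .single _ ih
  | double j u hj _ ih => rw [List.append_assoc]; exact .double j _ hj ih

theorem Blk.self (n : ℕ) : Blk k a d n (s k a d n) := by
  simpa using Blk.single (k := k) (a := a) (d := d) (n := n) [] .nil

theorem Blk.pw_append (n c j : ℕ) (hj : j < k - 1) :
    Blk k a d n (pw (s k a d n) (c + 1) ++ P k a d n j) := by
  induction c with
  | zero => simpa [pw] using Blk.double (k := k) (a := a) (d := d) (n := n) j [] hj .nil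
  | succ c ih => rw [pw, List.append_assoc]; exact .single _ ih

theorem Blk.succ_self (hk : 2 ≤ k) (hd0 : d 0 = 0) (hd : ∀ i, 1 ≤ i → 1 ≤ d i) (n : ℕ) :
    Blk k a d n (s k a d (n + 1)) := by
  obtain ⟨c, hc⟩ : ∃ c, d (n + 1) = c + 1 := ⟨d (n + 1) - 1, by have := hd (n + 1); omega⟩
  rw [s_succ hk hd0, hc]
  exact Blk.pw_append n c _ (by omega)

/-- Both kinds of blocks of level `n + 1` are concatenations of blocks of level `n`. -/
theorem Blk.descend (hk : 2 ≤ k) (hd0 : d 0 = 0) (hd : ∀ i, 1 ≤ i → 1 ≤ d i) {n : ℕ} {u : List α}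
    (hu : Blk k a d (n + 1) u) : Blk k a d n u := by
  induction hu with
  | nil => exact .nil
  | single u _ ih => exact (Blk.succ_self hk hd0 hd n).append ih
  | double j u hj _ ih =>
    refine ((Blk.succ_self hk hd0 hd n).append ?_).append ih
    cases j with
    | zero => exact Blk.self n
    | succ j =>
      obtain ⟨c, hc⟩ : ∃ c, d (n + 1) = c + 1 := ⟨d (n + 1) - 1, by have := hd (n + 1); omega⟩
      simp only [P, hc]
      exact Blk.pw_append n c j (by omega)

theorem Blk.s_of_le (hk : 2 ≤ k) (hd0 : d 0 = 0) (hd : ∀ i, 1 ≤ i → 1 ≤ d i) (n i : ℕ) :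
    Blk k a d n (s k a d (n + i)) := by
  induction i generalizing n with
  | zero => exact Blk.self n
  | succ i ih =>
    have h := ih (n + 1)
    rw [show n + 1 + i = n + (i + 1) by omega] at h
    exact h.descend hk hd0 hd

theorem Blk.eq_nil_or {n : ℕ} {u : List α} (hu : Blk k a d n u) : u = [] ∨ s k a d n <+: u := by
  cases hu with
  | nil => exact Or.inl rfl
  | single u _ => exact Or.inr (List.prefix_append _ _)
  | double j u _ _ => rw [List.append_assoc]; exact Or.inr (List.prefix_append _ _)

theorem Blk.infix_append {n : ℕ} {b u w : List α} (hu : Blk k a d n u)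
    (hl : w.length = (s k a d n).length) (hw : w <:+: b ++ u) :
    w <:+: u ∨ w <:+: b ++ s k a d n := by
  rcases List.infix_append_iff.1 hw with h | h | ⟨t₁, t₂, rfl, ⟨c, hc⟩, h2⟩
  · exact Or.inr (h.trans (List.prefix_append _ _).isInfix)
  · exact Or.inl h
  · right
    have h3 : t₂ <+: s k a d n := by
      rcases hu.eq_nil_or with h | h
      · rw [h, List.prefix_nil] at h2
        rw [h2]; exact List.nil_prefix
      · refine List.prefix_of_prefix_length_le h2 h ?_
        simp at hl; omega
    obtain ⟨v, hv⟩ := h3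
    exact ⟨c, v, by rw [← hc, ← hv]; simp⟩

/-- Each block is followed by `s_n` or by nothing, so a window of length `|s_n|` starting in a block
lies in that block followed by `s_n`. -/
theorem Blk.window {n : ℕ} (hn : s k a d n ≠ []) {u w : List α} (hu : Blk k a d n u)
    (hl : w.length = (s k a d n).length) (hw : w <:+: u) :
    w <:+: s k a d n ++ s k a d n ∨
      ∃ j, j < k - 1 ∧ w <:+: s k a d n ++ P k a d n j ++ s k a d n := by
  induction hu with
  | nil =>
    rw [List.infix_nil] at hw
    subst hw
    exact absurd (List.length_eq_zero_iff.1 hl.symm) hn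
  | single u hu ih =>
    rcases hu.infix_append hl hw with h | h
    · exact ih h
    · exact Or.inl h
  | double j u hj hu ih =>
    rcases hu.infix_append hl hw with h | h
    · exact ih h
    · exact Or.inr ⟨j, hj, h⟩

/-- A window of `s_n P_{n,j} s_n` lies in the left periodic run, or is the last `s_n`, or is
singular. -/
theorem window_cases (hk : 2 ≤ k) (hd0 : d 0 = 0) (hd : ∀ i, 1 ≤ i → 1 ≤ d i) {n j : ℕ}
    (hjn : j < n) {w : List α} (hl : w.length = (s k a d n).length)
    (hw : w <:+: s k a d n ++ P k a d n j ++ s k a d n) :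
    (∃ i, i < (s k a d n).length ∧ w = (s k a d n).drop i ++ (s k a d n).take i) ∨
      w ∈ Om k a d n (j + 1) := by
  have hne := s_ne_nil (a := a) hk hd0 hd n
  obtain ⟨u, v, h⟩ := hw
  have h1 := D_append_G (a := a) hk hd0 hd (n := n) (r := j + 1) (by omega) (by omega)
  have h4 : (s k a d n).reverse = (G k a d n (j + 1)).reverse ++ D k a d (n - (j + 1)) := by
    rw [← h1, List.reverse_append, D_pal hk hd0]
  have h5 := h.trans (sPs_eq hk hd0 hd hjn)
  rcases Nat.lt_or_ge (p k a d n).length u.length with hu | hu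
  · rcases List.eq_nil_or_concat v with rfl | ⟨v, y, rfl⟩
    · left
      refine ⟨0, List.length_pos_iff.2 hne, ?_⟩
      rw [List.append_nil] at h
      simpa using (List.append_inj' h hl).2
    · right
      refine ⟨hl, ?_⟩
      have h6 : p k a d n <+: u := by
        refine List.prefix_of_prefix_length_le (List.prefix_append _ ((G k a d n (j + 1)).reverse ++
          D k a d (n - (j + 1)) ++ G k a d n (j + 1))) ?_ hu.le
        rw [← h5, List.append_assoc]; exact List.prefix_append _ _
      obtain ⟨u', rfl⟩ := h6
      cases u' with
      | nil => simp at hu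
      | cons c u' =>
        simp only [List.append_assoc] at h5
        have h7 := List.append_cancel_left h5
        rw [List.append_assoc, ← h7]
        refine ⟨u', v, ?_⟩
        simp only [List.cons_append, List.drop_succ_cons, List.drop_zero, List.concat_eq_append]
        rw [← List.append_assoc, ← List.append_assoc, List.dropLast_concat]
  · left
    have h6 : u ++ w <+: s k a d n ++ p k a d n := by
      rw [s_append_p hk hd0, h4]
      refine List.prefix_of_prefix_length_le (List.prefix_append (u ++ w) v) (l₃ := u ++ w ++ v) ?_ ?_
      · rw [h5]
        exact ⟨G k a d n (j + 1), by simp⟩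
      · rw [← h4]; simp; omega
    obtain ⟨v', hv'⟩ := h6
    exact conj_of_infix_periodic hne _ (p k a d n) w le_rfl
      ((List.prefix_append _ _).trans (p_prefix_s hk hd0 n)) ⟨u, v', hv'⟩ hl

theorem cover (hk : 2 ≤ k) (hd0 : d 0 = 0) (hd : ∀ i, 1 ≤ i → 1 ≤ d i) {n : ℕ} (hn : k - 1 ≤ n)
    {w : List α} (hl : w.length = (s k a d n).length) (hw : FactorS k a d w) :
    (∃ i, i < (s k a d n).length ∧ w = (s k a d n).drop i ++ (s k a d n).take i) ∨
      ∃ r, 1 ≤ r ∧ r ≤ k - 1 ∧ w ∈ Om k a d n r := by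
  have hne := s_ne_nil (a := a) hk hd0 hd n
  obtain ⟨N, hN⟩ := hw
  have h1 : w <:+: s k a d (n + N) := hN.trans (s_prefix hk hd0 hd (by omega)).isInfix
  rcases (Blk.s_of_le hk hd0 hd n N).window hne hl h1 with h | ⟨j, hj, h⟩
  · exact Or.inl (conj_of_infix_sq hne h hl)
  · rcases window_cases hk hd0 hd (by omega) hl h with h | h
    · exact Or.inl h
    · exact Or.inr ⟨j + 1, by omega, by omega, h⟩

theorem factor_of_infix {u w : List α} (h : w <:+: u) (hu : FactorS k a d u) : FactorS k a d w := by
  obtain ⟨N, hN⟩ := hu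
  exact ⟨N, h.trans hN⟩

theorem factor_conj (hk : 2 ≤ k) (hd0 : d 0 = 0) (hd : ∀ i, 1 ≤ i → 1 ≤ d i) (n i : ℕ)
    (hi : i < (s k a d n).length) : FactorS k a d ((s k a d n).drop i ++ (s k a d n).take i) := by
  refine ⟨n + 2, List.IsInfix.trans ?_ (sp_infix hk hd0 hd n)⟩
  have h1 : (s k a d n).length ≤ (p k a d n).length + 1 := by
    have := P_length (a := a) (k := k) hd n (k - 1)
    rw [← s_eq_P hk hd0] at this; omega
  have h2 : p k a d n <+: s k a d n ++ p k a d n :=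
    (List.prefix_append _ _).trans (p_prefix_s hk hd0 n)
  have h3 : (s k a d n).take i <+: p k a d n := by
    refine List.prefix_of_prefix_length_le
      ((List.take_prefix i (s k a d n)).trans (List.prefix_append _ (p k a d n))) h2 ?_
    simp; omega
  obtain ⟨v, hv⟩ := h3
  refine ⟨(s k a d n).take i, v, ?_⟩
  rw [← List.append_assoc, List.take_append_drop, List.append_assoc, hv]

theorem factor_Om (hk : 2 ≤ k) (hd0 : d 0 = 0) (hd : ∀ i, 1 ≤ i → 1 ≤ d i) {n r : ℕ} (hn : k - 1 ≤ n)
    (hr : 1 ≤ r) (hrk : r ≤ k - 1) {w : List α} (hw : w ∈ Om k a d n r) : FactorS k a d w := by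
  obtain ⟨j, rfl⟩ : ∃ j, r = j + 1 := ⟨r - 1, by omega⟩
  refine factor_of_infix ?_ (sPs_infix hk hd0 hd n j (by omega))
  rw [sPs_eq hk hd0 hd (by omega)]
  exact hw.2.trans ((List.dropLast_prefix _).isInfix.trans
    ((List.drop_suffix _ _).isInfix.trans (List.suffix_append _ _).isInfix))

end Cover

/-! ### Lower bound on the factor complexity -/

section Complexity

variable {α : Type*} {k : ℕ} {a : ℕ → α} {d : ℕ → ℕ}

theorem p_suffix {m n : ℕ} (h : m ≤ n) : p k a d m <:+ p k a d n := by
  induction h with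
  | refl => exact List.suffix_rfl
  | step _ ih => rw [p_succ]; exact ih.trans (List.suffix_append _ _)

theorem le_p_length (hk : 2 ≤ k) (hd0 : d 0 = 0) (hd : ∀ i, 1 ≤ i → 1 ≤ d i) (n : ℕ) :
    n ≤ (p k a d n).length := by
  induction n with
  | zero => omega
  | succ n ih =>
    rw [p_succ, List.length_append, pw_length]
    have h1 := List.length_pos_iff.2 (s_ne_nil (a := a) hk hd0 hd n)
    have h2 := Nat.mul_pos (hd (n + 1) (by omega)) h1
    omega

/-- `p_n` can be followed by every letter, because it is a suffix of each later `p_m`, and `p_m` is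
followed by the letter of index `m mod k`. -/
theorem factor_special (hk : 2 ≤ k) (hd0 : d 0 = 0) (hd : ∀ i, 1 ≤ i → 1 ≤ d i) (n i : ℕ)
    (hi : i < k) : FactorS k a d (p k a d n ++ [a (i + 1)]) := by
  have h1 : n ≤ k * n + i := by nlinarith
  have h2 := p_prefix_s (a := a) hk hd0 (k * n + i)
  rw [lastLetter_last, Nat.mul_add_mod, Nat.mod_eq_of_lt hi] at h2
  refine ⟨k * n + i + 2, List.IsInfix.trans ?_ (h2.isInfix.trans (sp_infix hk hd0 hd _))⟩
  obtain ⟨u, hu⟩ := p_suffix (k := k) (a := a) (d := d) h1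
  rw [← hu]
  exact (List.IsSuffix.isInfix ⟨u, by simp⟩)

theorem exists_special (hk : 2 ≤ k) (hd0 : d 0 = 0) (hd : ∀ i, 1 ≤ i → 1 ≤ d i) (l : ℕ) :
    ∃ q : List α, q.length = l ∧ ∀ i, i < k → FactorS k a d (q ++ [a (i + 1)]) := by
  have h := le_p_length (a := a) hk hd0 hd l
  refine ⟨(p k a d l).drop ((p k a d l).length - l), by simp; omega, fun i hi => ?_⟩
  refine factor_of_infix ?_ (factor_special hk hd0 hd l i hi)
  obtain ⟨u, hu⟩ := List.drop_suffix ((p k a d l).length - l) (p k a d l)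
  refine List.IsSuffix.isInfix ⟨u, ?_⟩
  rw [← List.append_assoc, hu]

theorem exists_ext (hk : 2 ≤ k) (hd0 : d 0 = 0) (hd : ∀ i, 1 ≤ i → 1 ≤ d i) {w : List α}
    (hw : FactorS k a d w) : ∃ x, FactorS k a d (w ++ [x]) := by
  obtain ⟨N, u, v, h⟩ := hw
  cases v with
  | cons x v => exact ⟨x, N, u, v, by rw [← h]; simp⟩
  | nil =>
    -- Here `w` is a suffix of `s_N`, which is followed by `P_{N,0}` in a factor.
    obtain ⟨M, hM⟩ := sPs_infix (a := a) hk hd0 hd N 0 (by omega)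
    have h3 : ∃ x t, P k a d N 0 = x :: t := by
      cases N with
      | zero => exact ⟨_, _, rfl⟩
      | succ N =>
        obtain ⟨x, t, hx⟩ := List.exists_cons_of_ne_nil (s_ne_nil (a := a) hk hd0 hd N)
        exact ⟨x, t, hx⟩
    obtain ⟨x, t, hx⟩ := h3
    refine ⟨x, M, List.IsInfix.trans ⟨u, t ++ s k a d N, ?_⟩ hM⟩
    rw [hx, ← h]; simp

/-- The lower bound `(k - 1) l + 1` for the number of factors of length `l`: every factor extends to
the right in at least one way, and a special factor does so in `k` ways. -/
theorem complexity (hk : 2 ≤ k) (ha : ∀ i j, 1 ≤ i → i ≤ k → 1 ≤ j → j ≤ k → a i = a j → i = j)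
    (hd0 : d 0 = 0) (hd : ∀ i, 1 ≤ i → 1 ≤ d i) (l : ℕ) :
    ∃ X : Finset (List α), (∀ w ∈ X, w.length = l ∧ FactorS k a d w) ∧ (k - 1) * l + 1 ≤ X.card := by
  classical
  induction l with
  | zero => exact ⟨{[]}, by simp [FactorS], by simp⟩
  | succ l ih =>
    obtain ⟨X, hX, hc⟩ := ih
    obtain ⟨q, hq, hqf⟩ := exists_special (a := a) hk hd0 hd l
    have hext : ∀ w, ∃ x, FactorS k a d w → FactorS k a d (w ++ [x]) := by
      intro w
      by_cases hw : FactorS k a d w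
      · obtain ⟨x, hx⟩ := exists_ext hk hd0 hd hw
        exact ⟨x, fun _ => hx⟩
      · exact ⟨a 0, fun h => absurd h hw⟩
    choose f hf using hext
    have hinj : Function.Injective (fun w : List α => w ++ [f w]) := by
      intro w w' h
      exact (List.append_inj' h rfl).1
    have hinj2 : Set.InjOn (fun i => q ++ [a (i + 1)]) (Finset.range k : Set ℕ) := by
      intro i hi j hj h
      simp only [Finset.coe_range, Set.mem_Iio] at hi hj
      have := (List.append_inj' h rfl).2
      have := ha (i + 1) (j + 1) (by omega) (by omega) (by omega) (by omega) (by simpa using this)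
      omega
    refine ⟨(X.erase q).image (fun w => w ++ [f w]) ∪
      (Finset.range k).image (fun i => q ++ [a (i + 1)]), ?_, ?_⟩
    · intro w hw
      rcases Finset.mem_union.1 hw with h | h
      · obtain ⟨v, hv, rfl⟩ := Finset.mem_image.1 h
        have := hX v (Finset.mem_of_mem_erase hv)
        exact ⟨by simp [this.1], hf v this.2⟩
      · obtain ⟨i, hi, rfl⟩ := Finset.mem_image.1 h
        exact ⟨by simp [hq], hqf i (Finset.mem_range.1 hi)⟩
    · rw [Finset.card_union_of_disjoint, Finset.card_image_of_injective _ hinj,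
        Finset.card_image_of_injOn hinj2, Finset.card_range]
      · have := Finset.pred_card_le_card_erase (s := X) (a := q)
        rw [Nat.mul_succ]
        omega
      · rw [Finset.disjoint_left]
        intro w h1 h2
        obtain ⟨v, hv, rfl⟩ := Finset.mem_image.1 h1
        obtain ⟨i, hi, h⟩ := Finset.mem_image.1 h2
        exact (Finset.mem_erase.1 hv).1 (List.append_inj' h rfl).1.symm

end Complexity

/-! ### Counting -/

section Count

variable {α : Type*}

/-- Enumeration of the candidate words: `cand 0 t` is the `t`-th conjugate of `s_n`, and
`cand r t` for `r ≥ 1` is the `t`-th window of the word defining the singular words of kind `r`. -/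
def cand (k : ℕ) (a : ℕ → α) (d : ℕ → ℕ) (n r t : ℕ) : List α :=
  if r = 0 then (s k a d n).drop t ++ (s k a d n).take t
  else (((((G k a d n r).reverse ++ D k a d (n - r) ++ G k a d n r).drop 1).dropLast).drop t).take
    (s k a d n).length

/-- The index set of the enumeration `cand`. -/
def idx (k : ℕ) (a : ℕ → α) (d : ℕ → ℕ) (n : ℕ) : Finset (Σ _ : ℕ, ℕ) :=
  (Finset.range k).sigma (fun r => Finset.range
    (if r = 0 then (s k a d n).length else (s k a d n).length - ((D k a d (n - r)).length + 1)))

variable {k : ℕ} {a : ℕ → α} {d : ℕ → ℕ}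

theorem idx_card (hk : 2 ≤ k) (hd0 : d 0 = 0) (hd : ∀ i, 1 ≤ i → 1 ≤ d i) {n : ℕ} (hn : k - 1 ≤ n) :
    (idx k a d n).card = (k - 1) * (s k a d n).length + 1 := by
  unfold idx
  rw [Finset.card_sigma]
  simp only [Finset.card_range]
  obtain ⟨K, rfl⟩ : ∃ K, k = K + 1 := ⟨k - 1, by omega⟩
  rw [Finset.sum_range_succ']
  have h1 := s_length (a := a) hk hd0 hd n
  have h2 : ∑ j ∈ Finset.range K, ((if j + 1 = 0 then (s (K + 1) a d n).length else
      (s (K + 1) a d n).length - ((D (K + 1) a d (n - (j + 1))).length + 1)) +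
        e (K + 1) a d n j) = ∑ j ∈ Finset.range K, (s (K + 1) a d n).length := by
    apply Finset.sum_congr rfl
    intro j hj
    have hj' := Finset.mem_range.1 hj
    have h3 := e_lt (a := a) hk hd0 hd n j (by omega)
    have h4 : e (K + 1) a d n j = (D (K + 1) a d (n - (j + 1))).length + 1 := by
      unfold e; rw [if_pos (by omega)]
    rw [if_neg (by omega)]
    omega
  rw [Finset.sum_add_distrib, Finset.sum_const, Finset.card_range, smul_eq_mul] at h2
  simp only [Nat.add_sub_cancel, if_true] at h1 ⊢
  omega

theorem Om_cand (hk : 2 ≤ k) (hd0 : d 0 = 0) (hd : ∀ i, 1 ≤ i → 1 ≤ d i) {n r : ℕ} (hn : k - 1 ≤ n)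
    (hr : 1 ≤ r) (hrk : r ≤ k - 1) {w : List α} (hw : w ∈ Om k a d n r) :
    ∃ t, (⟨r, t⟩ : Σ _ : ℕ, ℕ) ∈ idx k a d n ∧ cand k a d n r t = w := by
  obtain ⟨hl, u, v, h⟩ := hw
  refine ⟨u.length, ?_, ?_⟩
  · have h1 := congrArg List.length (D_append_G (a := a) hk hd0 hd (n := n) hr (by omega))
    have h2 := congrArg List.length h
    simp only [List.length_append, List.length_dropLast, List.length_drop,
      List.length_reverse] at h1 h2
    have h3 := List.length_pos_iff.2 (s_ne_nil (a := a) hk hd0 hd n)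
    simp only [idx, Finset.mem_sigma, Finset.mem_range]
    rw [if_neg (by omega)]
    omega
  · unfold cand
    rw [if_neg (by omega), ← h, ← hl]
    simp

theorem conj_cand (hk : 2 ≤ k) {n : ℕ} {w : List α} (hw : ∃ j, j < (s k a d n).length ∧
      w = (s k a d n).drop j ++ (s k a d n).take j) :
    ∃ t, (⟨0, t⟩ : Σ _ : ℕ, ℕ) ∈ idx k a d n ∧ cand k a d n 0 t = w := by
  obtain ⟨j, hj, rfl⟩ := hw
  refine ⟨j, ?_, by simp [cand]⟩
  simp only [idx, Finset.mem_sigma, Finset.mem_range]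
  exact ⟨by omega, by simpa using hj⟩

/-- The enumeration reaches all factors of length `|s_n|`, and there are at least as many of these as
indices, so it has no repetitions. -/
theorem cand_injOn (hk : 2 ≤ k)
    (ha : ∀ i j, 1 ≤ i → i ≤ k → 1 ≤ j → j ≤ k → a i = a j → i = j)
    (hd0 : d 0 = 0) (hd : ∀ i, 1 ≤ i → 1 ≤ d i) {n : ℕ} (hn : k - 1 ≤ n) :
    Set.InjOn (fun q : Σ _ : ℕ, ℕ => cand k a d n q.1 q.2) (idx k a d n : Set (Σ _ : ℕ, ℕ)) := by
  classical
  obtain ⟨X, hX, hc⟩ := complexity hk ha hd0 hd (s k a d n).length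
  rw [← idx_card hk hd0 hd hn] at hc
  apply Finset.injOn_of_card_image_eq
  refine le_antisymm Finset.card_image_le (hc.trans (Finset.card_le_card ?_))
  intro w hw
  rw [Finset.mem_image]
  rcases cover hk hd0 hd hn (hX w hw).1 (hX w hw).2 with h | ⟨r, h1, h2, h⟩
  · obtain ⟨t, ht, he⟩ := conj_cand hk h
    exact ⟨_, ht, he⟩
  · obtain ⟨t, ht, he⟩ := Om_cand hk hd0 hd hn h1 h2 h
    exact ⟨_, ht, he⟩

end Count

theorem stmt9 {α : Type*} (k : ℕ) (hk : 2 ≤ k) (a : ℕ → α)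
    (ha : ∀ i j, 1 ≤ i → i ≤ k → 1 ≤ j → j ≤ k → a i = a j → i = j)
    (d : ℕ → ℕ) (hd0 : d 0 = 0) (hd : ∀ i, 1 ≤ i → 1 ≤ d i) (n : ℕ) (hn : k - 1 ≤ n) :
    (∀ w : List α, w.length = (s k a d n).length →
        (FactorS k a d w ↔
          (∃ j, j < (s k a d n).length ∧
              w = (s k a d n).drop j ++ (s k a d n).take j) ∨
            ∃ r, 1 ≤ r ∧ r ≤ k - 1 ∧ w ∈ Om k a d n r)) ∧
    (∀ w : List α, ∀ r, 1 ≤ r → r ≤ k - 1 → w ∈ Om k a d n r →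
        ¬∃ j, j < (s k a d n).length ∧
            w = (s k a d n).drop j ++ (s k a d n).take j) ∧
    (∀ w : List α, ∀ r r', 1 ≤ r → r ≤ k - 1 → 1 ≤ r' → r' ≤ k - 1 →
        w ∈ Om k a d n r → w ∈ Om k a d n r' → r = r') := by


  refine ⟨fun w hl => ⟨cover hk hd0 hd hn hl, ?_⟩, ?_, ?_⟩
  · rintro (⟨j, hj, rfl⟩ | ⟨r, h1, h2, h⟩)
    · exact factor_conj hk hd0 hd n j hj
    · exact factor_Om hk hd0 hd hn h1 h2 h
  · intro w r h1 h2 h hc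
    obtain ⟨t, ht, he⟩ := Om_cand hk hd0 hd hn h1 h2 h
    obtain ⟨t', ht', he'⟩ := conj_cand hk hc
    have := congrArg Sigma.fst (cand_injOn hk ha hd0 hd hn ht ht' (he.trans he'.symm))
    simp only at this
    omega
  · intro w r r' h1 h2 h1' h2' h h'
    obtain ⟨t, ht, he⟩ := Om_cand hk hd0 hd hn h1 h2 h
    obtain ⟨t', ht', he'⟩ := Om_cand hk hd0 hd hn h1' h2' h'
    exact congrArg Sigma.fst (cand_injOn hk ha hd0 hd hn ht ht' (he.trans he'.symm))

end Epi
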